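/- arXiv:math/0701519 — 3 statements merged into one kernel-verified Lean document; each statement's English description precedes it below -/
import Mathlib

section
/- Let f and g be permutably reducible 3-quasigroups of order 4 such that f(x,y,0) = g(x,y,0), f(x,0,z) = g(x,0,z), and f(0,y,z) = g(0,y,z) for all x,y,z ∈ {0,1,2,3}. Then f = g. -/
/-- An `n`-ary quasigroup: uniquely invertible in each place. -/
def IsNQuasigroup {n : ℕ} {S : Type*} (f : (Fin n → S) → S) : Prop :=
  ∀ (i : Fin n) (x : Fin n → S), Function.Bijective fun a => f (Function.update x i a)

/-- Permutable reducibility (Definition 1.4). -/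
def PermutablyReducible {n : ℕ} {S : Type*} (f : (Fin n → S) → S) : Prop :=
  ∃ (m : ℕ) (_ : 2 ≤ m) (_ : m ≤ n - 1)
    (σ : Equiv.Perm (Fin n))
    (g : (Fin m → S) → S)
    (h : (Fin (n - m + 1) → S) → S),
    IsNQuasigroup g ∧ IsNQuasigroup h ∧
    ∀ x : Fin n → S,
      f x = h (Fin.cons (g fun k : Fin m => x (σ ⟨k.val, by have := k.isLt; omega⟩))
                 fun j : Fin (n - m) => x (σ ⟨m + j.val, by have := j.isLt; omega⟩))

/-- `l(0)=l(1)=0`, `l(2)=l(3)=1`. -/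
def lmap : Fin 4 → ZMod 2 := ![0, 0, 1, 1]

/-- Standardly semilinear: the predicate of `f` is pointwise `≤ L`. -/
def StdSemilinear {n : ℕ} (f : (Fin n → Fin 4) → Fin 4) : Prop :=
  ∀ x : Fin n → Fin 4, lmap (f x) = ∑ i, lmap (x i)

def Semilinear {n : ℕ} (f : (Fin n → Fin 4) → Fin 4) : Prop :=
  ∃ (g : (Fin n → Fin 4) → Fin 4) (τ₀ : Equiv.Perm (Fin 4)) (τ : Fin n → Equiv.Perm (Fin 4)),
    IsNQuasigroup g ∧ StdSemilinear g ∧ ∀ x, τ₀ (f x) = g fun i => τ i (x i)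

noncomputable def PrincipalRetract {n k : ℕ} {S : Type*} (f : (Fin n → S) → S) (ι : Fin k → Fin n)
    (c : Fin n → S) : (Fin k → S) → S :=
  fun y => f (Function.extend ι y c)

def IsBinaryQG {S : Type*} (h : S → S → S) : Prop :=
  (∀ a, Function.Bijective (h a)) ∧ ∀ b, Function.Bijective fun a => h a b

def CondA {n : ℕ} {C : Type*} (μ : Fin n → Fin n → C) : Prop :=
  ∀ a b c : Fin n, a ≠ b → a ≠ c → b ≠ c →
    μ a b = μ a c ∨ μ a b = μ b c ∨ μ a c = μ b c

def CondB {n : ℕ} {C : Type*} [DecidableEq C] (μ : Fin n → Fin n → C) : Prop :=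
  ∀ a b c d : Fin n, a ≠ b → a ≠ c → a ≠ d → b ≠ c → b ≠ d → c ≠ d →
    (∃ c₁ c₂ : C, c₁ ≠ c₂ ∧
      [μ a b, μ a c, μ a d, μ b c, μ b d, μ c d].count c₁ = 3 ∧
      [μ a b, μ a c, μ a d, μ b c, μ b d, μ c d].count c₂ = 3) →
    ((μ a b = μ a c ∧ μ a c = μ b c) ∨ (μ a b = μ a d ∧ μ a d = μ b d) ∨
     (μ a c = μ a d ∧ μ a d = μ c d) ∨ (μ b c = μ b d ∧ μ b d = μ c d))

def colorOf {n : ℕ} (f : (Fin n → Fin 4) → Fin 4) (i j : Fin n) : Fin 4 → Fin 4 → Fin 4 :=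
  fun a b => f fun t => if t = i then a else if t = j then b else 0

def Normalized {n : ℕ} (f : (Fin n → Fin 4) → Fin 4) : Prop :=
  ∀ (i : Fin n) (a : Fin 4), f (fun t => if t = i then a else 0) = a

def piPerm : Fin 4 → Fin 4 := ![1, 0, 3, 2]

open Function

theorem exists_fourth_of_ne (p q r : Fin 4) :
    p ≠ q → p ≠ r → q ≠ r → ∃ s, s ≠ p ∧ s ≠ q ∧ s ≠ r ∧ ∀ t, t = p ∨ t = q ∨ t = r ∨ t = s := by
  decide +revert

/-- Every loop of order four is associative. -/
theorem assoc_of_loop_four (m : Fin 4 → Fin 4 → Fin 4) (e : Fin 4)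
    (hl : ∀ a, m e a = a) (hr : ∀ a, m a e = a)
    (il : ∀ a, Injective (m a)) (ir : ∀ b, Injective fun a => m a b) (x y z : Fin 4) :
    m (m x y) z = m x (m y z) := by
  have jl : ∀ p q r s, m p q = s → r ≠ q → m p r ≠ s := by
    rintro p q r _ rfl h
    exact (il p).ne h
  have jr : ∀ p q r s, m q p = s → r ≠ q → m r p ≠ s := by
    rintro p q r _ rfl h
    exact (ir p).ne h
  have nel : ∀ p q, q ≠ e → m p q ≠ p := fun p q => jl p e q p (hr p)
  have ner : ∀ p q, p ≠ e → m p q ≠ q := fun p q => jr q e p q (hl q)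
  by_cases hsq : ∀ a, m a a = e
  · obtain ⟨a, b, hea, heb, hab⟩ : ∃ a b, e ≠ a ∧ e ≠ b ∧ a ≠ b := by
      clear hsq hl hr nel ner
      decide +revert
    obtain ⟨c, hce, hca, hcb, hall⟩ := exists_fourth_of_ne e a b hea heb hab
    have third : ∀ p q r, p ≠ e → q ≠ e → r ≠ e → p ≠ q → r ≠ p → r ≠ q → m p q = r := by
      intro p q r hp hq hr' hpq hrp hrq
      have h₁ := nel p q hq
      have h₂ := ner p q hp
      have h₃ := jl p p q e (hsq p) hpq.symm
      have aux : ∀ e p q r s : Fin 4, p ≠ e → q ≠ e → r ≠ e → p ≠ q → r ≠ p → r ≠ q →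
          s ≠ p → s ≠ q → s ≠ e → s = r := by decide
      exact aux e p q r _ hp hq hr' hpq hrp hrq h₁ h₂ h₃
    have ab := third a b c hea.symm heb.symm hce hab hca hcb
    have ba := third b a c heb.symm hea.symm hce hab.symm hcb hca
    have ac := third a c b hea.symm hce heb.symm hca.symm hab.symm hcb.symm
    have ca := third c a b hce hea.symm heb.symm hca hcb.symm hab.symm
    have bc := third b c a heb.symm hce hea.symm hcb.symm hab hca.symm
    have cb := third c b a hce heb.symm hea.symm hcb hca.symm hab
    rcases hall x with h | h | h | h <;> rcases hall y with h' | h' | h' | h' <;>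
      rcases hall z with h'' | h'' | h'' | h'' <;>
      simp only [h, h', h'', hl, hr, hsq, ab, ba, ac, ca, bc, cb]
  · push Not at hsq
    obtain ⟨a, ha⟩ := hsq
    have hea : e ≠ a := fun h => ha (h ▸ hl e)
    obtain ⟨b, aa⟩ : ∃ b, m a a = b := ⟨_, rfl⟩
    rw [aa] at ha
    have hab : a ≠ b := fun h => nel a a hea.symm (aa.trans h.symm)
    obtain ⟨c, hce, hca, hcb, hall⟩ := exists_fourth_of_ne e a b hea ha.symm hab
    have ac : m a c = e := by
      have := nel a c hce; have := ner a c hea.symm; have := jl a a c b aa hca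
      have := hall (m a c); tauto
    have ca : m c a = e := by
      have := nel c a hea.symm; have := ner c a hce; have := jr a a c b aa hca
      have := hall (m c a); tauto
    have ab : m a b = c := by
      have := nel a b ha; have := ner a b hea.symm; have := jl a c b e ac hcb.symm
      have := hall (m a b); tauto
    have ba : m b a = c := by
      have := nel b a hea.symm; have := ner b a ha; have := jr a c b e ca hcb.symm
      have := hall (m b a); tauto
    have bc : m b c = a := by
      have := nel b c hce; have := ner b c ha; have := jr c a b e ac hab.symm
      have := hall (m b c); tauto
    have cb : m c b = a := by
      have := nel c b ha; have := ner c b hce; have := jl c a b e ca hab.symm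
      have := hall (m c b); tauto
    have bb : m b b = e := by
      have := nel b b ha; have := jl b a b c ba hab.symm; have := jl b c b a bc hcb.symm
      have := hall (m b b); tauto
    have cc : m c c = b := by
      have := nel c c hce; have := jl c a c e ca hca; have := jl c b c a cb hcb
      have := hall (m c c); tauto
    rcases hall x with h | h | h | h <;> rcases hall y with h' | h' | h' | h' <;>
      rcases hall z with h'' | h'' | h'' | h'' <;>
      simp only [h, h', h'', hl, hr, aa, ab, ac, ba, bb, bc, ca, cb, cc]

/-- The `i`-th argument of `f` splits off: `f` factors through its restriction to any hyperplane
on which this argument is constant. -/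
def SplitsOff {n : ℕ} {S : Type*} (f : (Fin n → S) → S) (i : Fin n) : Prop :=
  ∀ x y : Fin n → S, x i = y i → f x = f y → ∀ c, f (update x i c) = f (update y i c)

theorem PermutablyReducible.exists_splitsOff {S : Type*} {f : (Fin 3 → S) → S}
    (hf : PermutablyReducible f) : ∃ i, SplitsOff f i := by
  obtain ⟨m, hm, hm', σ, g, h, -, hh, hfx⟩ := hf
  obtain rfl : m = 2 := by omega
  refine ⟨σ 2, fun x y hxy hfxy c => ?_⟩
  have hg : (g fun k : Fin 2 => x (σ ⟨k.val, by omega⟩)) =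
      g fun k : Fin 2 => y (σ ⟨k.val, by omega⟩) := by
    apply (hh 0 (Fin.cons (x (σ 0)) fun _ => x (σ 2))).injective
    simp only [Fin.update_cons_zero]
    rw [hfx, hfx] at hfxy
    convert hfxy using 3
    · funext j
      fin_cases j
      rfl
    · funext j
      fin_cases j
      exact hxy
  rw [hfx, hfx]
  congr 2
  · convert hg using 3 with k k <;>
      exact update_of_ne (σ.injective.ne (by fin_cases k <;> simp [Fin.ext_iff])) _ _
  · funext j
    fin_cases j
    exact (update_self (σ 2) c x).trans (update_self (σ 2) c y).symm

theorem eq_of_splitsOff_same {n : ℕ} {f g : (Fin n → Fin 4) → Fin 4} {i j k : Fin n}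
    (hf : IsNQuasigroup f)
    (hfi : SplitsOff f i) (hgi : SplitsOff g i)
    (hfg : ∀ x l, x l = 0 → f x = g x) (hij : i ≠ j) (hik : i ≠ k) (hjk : j ≠ k) : f = g := by
  funext x
  obtain ⟨a, ha⟩ := (hf k 0).surjective (f (update x i 0))
  have h0 : update (0 : Fin n → Fin 4) k a i = update x i 0 i := by simp [hik]
  have hj : ∀ c, update (update (0 : Fin n → Fin 4) k a) i c j = 0 := by simp [hij.symm, hjk]
  have hg : g (update 0 k a) = g (update x i 0) := by
    rw [← hfg _ j (by simp [hjk]), ← hfg _ i (by simp)]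
    exact ha
  have h₁ := hfi _ _ h0 ha (x i)
  have h₂ := hgi _ _ h0 hg (x i)
  rw [hfg _ j (hj _), h₂] at h₁
  simpa using h₁.symm

/-- Two ternary quasigroups of order four, one split as `(x y) z` and the other as `x (y z)`,
coincide if they agree whenever some argument is zero. -/
theorem eq_of_splits_left_right {F G : Fin 4 → Fin 4 → Fin 4 → Fin 4}
    (hx : ∀ y z, Bijective fun x => F x y z) (hy : ∀ x z, Bijective fun y => F x y z)
    (hz : ∀ x y, Bijective fun z => F x y z)
    (hF : ∀ x y x' y', F x y 0 = F x' y' 0 → ∀ z, F x y z = F x' y' z)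
    (hG : ∀ y z y' z', G 0 y z = G 0 y' z' → ∀ x, G x y z = G x y' z')
    (h₁ : ∀ y z, F 0 y z = G 0 y z) (h₂ : ∀ x z, F x 0 z = G x 0 z)
    (h₃ : ∀ x y, F x y 0 = G x y 0) (x y z : Fin 4) : F x y z = G x y z := by
  let α := Equiv.ofBijective _ (hx 0 0)
  let β := Equiv.ofBijective _ (hy 0 0)
  let γ := Equiv.ofBijective _ (hz 0 0)
  have hα : ∀ u, F (α.symm u) 0 0 = u := α.apply_symm_apply
  have hβ : ∀ u, F 0 (β.symm u) 0 = u := β.apply_symm_apply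
  have hγ : ∀ u, F 0 0 (γ.symm u) = u := γ.apply_symm_apply
  have hα₀ : α.symm (F 0 0 0) = 0 := α.symm_apply_apply 0
  have hβ₀ : β.symm (F 0 0 0) = 0 := β.symm_apply_apply 0
  have hAB : ∀ u v, F (α.symm u) (β.symm v) 0 = F (α.symm u) 0 (γ.symm v) := fun u v => by
    rw [h₃, h₂]
    exact hG _ _ _ _ (by rw [← h₁, ← h₁, hβ, hγ]) _
  have hCB : ∀ v w, F 0 (β.symm v) w = F (α.symm v) 0 w := fun v w =>
    hF _ _ _ _ (by rw [hα, hβ]) _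
  have assoc := assoc_of_loop_four (fun u v => F (α.symm u) (β.symm v) 0) (F 0 0 0)
    (fun a => by simp only [hα₀, hβ]) (fun a => by simp only [hβ₀, hα])
    (fun a => (hy _ 0).injective.comp β.symm.injective)
    (fun b => (hx _ 0).injective.comp α.symm.injective) (α x) (β y) (γ z)
  simp only [Equiv.symm_apply_apply] at assoc
  have hl : F x y z = F (α.symm (F x y 0)) (β.symm (γ z)) 0 := by
    rw [hAB, Equiv.symm_apply_apply]
    exact hF _ _ _ _ (hα _).symm _
  have hr : G x y z = F x (β.symm (F (α.symm (β y)) (β.symm (γ z)) 0)) 0 := by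
    rw [hAB, ← hCB, Equiv.symm_apply_apply, Equiv.symm_apply_apply, h₃]
    exact hG _ _ _ _ (by rw [← h₁, ← h₁, hβ]) _
  rw [hl, hr, assoc]

theorem eq_of_splitsOff_ne {f g : (Fin 3 → Fin 4) → Fin 4} {i j : Fin 3} (hf : IsNQuasigroup f)
    (hfi : SplitsOff f i) (hgj : SplitsOff g j)
    (hfg : ∀ x l, x l = 0 → f x = g x) (hij : i ≠ j) : f = g := by
  obtain ⟨k, hki, hkj, hall⟩ : ∃ k, k ≠ i ∧ k ≠ j ∧ ∀ l, l = i ∨ l = j ∨ l = k := by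
    clear hfi hgj
    revert i j
    decide
  let v : Fin 4 → Fin 4 → Fin 4 → Fin 3 → Fin 4 :=
    fun p q r t => if t = j then p else if t = i then r else q
  have vj : ∀ p q r, v p q r j = p := fun p q r => if_pos rfl
  have vi : ∀ p q r, v p q r i = r := fun p q r => by simp [v, hij]
  have vk : ∀ p q r, v p q r k = q := fun p q r => by simp [v, hki, hkj]
  have hext : ∀ x, x = v (x j) (x k) (x i) := fun x => by
    funext t
    rcases hall t with rfl | rfl | rfl
    exacts [(vi _ _ _).symm, (vj _ _ _).symm, (vk _ _ _).symm]
  have uj : ∀ p q r c, update (v p q r) j c = v c q r := fun p q r c => by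
    rw [hext (update _ _ _)]; simp [vi, vk, hij, hkj]
  have ui : ∀ p q r c, update (v p q r) i c = v p q c := fun p q r c => by
    rw [hext (update _ _ _)]; simp [vj, vk, hij.symm, hki]
  have uk : ∀ p q r c, update (v p q r) k c = v p c r := fun p q r c => by
    rw [hext (update _ _ _)]; simp [vi, vj, hki.symm, hkj.symm]
  funext x
  rw [hext x]
  refine eq_of_splits_left_right (F := fun p q r => f (v p q r)) (G := fun p q r => g (v p q r))
    (fun q r => ?_) (fun p r => ?_) (fun p q => ?_) (fun p q p' q' h r => ?_)
    (fun q r q' r' h p => ?_) (fun q r => hfg _ j (vj _ _ _)) (fun p r => hfg _ k (vk _ _ _))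
    (fun p q => hfg _ i (vi _ _ _)) _ _ _
  · simpa only [uj] using hf j (v 0 q r)
  · simpa only [uk] using hf k (v p 0 r)
  · simpa only [ui] using hf i (v p q 0)
  · simpa only [ui] using hfi _ _ (by rw [vi, vi]) h r
  · simpa only [uj] using hgj _ _ (by rw [vj, vj]) h p

/-- Proposition 3.3: permutably reducible 3-quasigroups of order 4
agreeing on all triples with a zero in any fixed place coincide. -/
theorem stmt9 (f g : (Fin 3 → Fin 4) → Fin 4)
    (hf : IsNQuasigroup f) (hg : IsNQuasigroup g)
    (hfr : PermutablyReducible f) (hgr : PermutablyReducible g)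
    (h1 : ∀ x : Fin 3 → Fin 4, x 2 = 0 → f x = g x)
    (h2 : ∀ x : Fin 3 → Fin 4, x 1 = 0 → f x = g x)
    (h3 : ∀ x : Fin 3 → Fin 4, x 0 = 0 → f x = g x) :
    f = g := by
  have hfg : ∀ x l, x l = 0 → f x = g x := fun x l => by
    fin_cases l
    exacts [h3 x, h2 x, h1 x]
  obtain ⟨i, hi⟩ := hfr.exists_splitsOff
  obtain ⟨j, hj⟩ := hgr.exists_splitsOff
  obtain rfl | hij := eq_or_ne i j
  · obtain ⟨j, k, hij, hik, hjk⟩ : ∃ j k, i ≠ j ∧ i ≠ k ∧ j ≠ k := by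
      clear hi hj
      decide +revert
    exact eq_of_splitsOff_same hf hi hj hfg hij hik hjk
  · exact eq_of_splitsOff_ne hf hi hj hfg hij
end

section
/- Let n ≥ 5 and let f be an n-quasigroup of order 4 all of whose principal 3-retracts and principal 4-retracts are permutably reducible. Then f is completely reducible, i.e., f can be represented as a repetition-free composition of n−1 binary quasigroups. -/
/-- Complete reducibility: `f` is permutably reducible and so are all its
principal retracts of arity more than 2. -/
def CompletelyReducible {n : ℕ} (f : (Fin n → Fin 4) → Fin 4) : Prop :=
  PermutablyReducible f ∧
  ∀ (k : ℕ), 3 ≤ k → k ≤ n → ∀ (ι : Fin k → Fin n), Function.Injective ι →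
    ∀ c : Fin n → Fin 4, PermutablyReducible (PrincipalRetract f ι c)

namespace OrderFour

/-- The first two arguments of `p` can be merged. -/
def Merges {S : Type*} (p : S → S → S → S) : Prop :=
  ∀ x y x' y' z z', p x y z = p x' y' z → p x y z' = p x' y' z'

/-- Some two arguments of `p` can be merged. -/
def SomeMerge {S : Type*} (p : S → S → S → S) : Prop :=
  Merges p ∨ Merges (fun x z y => p x y z) ∨ Merges (fun y z x => p x y z)

/-- A ternary operation that is injective in each argument. -/
def TernaryInjective {S : Type*} (p : S → S → S → S) : Prop :=
  (∀ y z, Function.Injective fun x => p x y z) ∧ (∀ x z, Function.Injective fun y => p x y z) ∧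
    ∀ x y, Function.Injective fun z => p x y z

set_option synthInstance.maxSize 1000 in
set_option synthInstance.maxHeartbeats 200000 in
/-- Completions of a Latin square of order 4 with border `0` are abelian group tables. -/
theorem loop_table :
    ∀ a : Fin 4, a ≠ 1 → ∀ b : Fin 4, b ≠ 1 → b ≠ 2 → b ≠ a → ∀ c : Fin 4, c ≠ 1 → c ≠ 3 →
      c ≠ a → c ≠ b →
    ∀ d : Fin 4, d ≠ 2 → d ≠ 1 → d ≠ a → ∀ k : Fin 4, k ≠ 2 → k ≠ d → k ≠ b →
      ∀ l : Fin 4, l ≠ 2 → l ≠ 3 → l ≠ d → l ≠ k → l ≠ c →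
    ∀ r : Fin 4, r ≠ 3 → r ≠ 1 → r ≠ a → r ≠ d → ∀ s : Fin 4, s ≠ 3 → s ≠ 2 → s ≠ r → s ≠ b →
      s ≠ k → ∀ t : Fin 4, t ≠ 3 → t ≠ r → t ≠ s → t ≠ c → t ≠ l →
    ∀ x y z : Fin 4,
      let T : Fin 4 → Fin 4 → Fin 4 := ![![0, 1, 2, 3], ![1, a, b, c], ![2, d, k, l], ![3, r, s, t]]
      T x y = T y x ∧ T (T x y) z = T (T x z) y := by
  decide +kernel

theorem loop_zero (op : Fin 4 → Fin 4 → Fin 4) (hl : ∀ a, op 0 a = a) (hr : ∀ a, op a 0 = a)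
    (il : ∀ a, Function.Injective (op a)) (ir : ∀ b, Function.Injective fun a => op a b)
    (x y z : Fin 4) : op x y = op y x ∧ op (op x y) z = op (op x z) y := by
  have row : ∀ a b c, b ≠ c → op a b ≠ op a c := fun a b c h => (il a).ne h
  have col : ∀ a b c, b ≠ c → op b a ≠ op c a := fun a b c h => (ir a).ne h
  have row0 : ∀ a b, b ≠ 0 → op a b ≠ a := fun a b h => by simpa [hr] using row a b 0 h
  have col0 : ∀ a b, b ≠ 0 → op b a ≠ a := fun a b h => by simpa [hl] using col a b 0 h
  have hop : op = ![![0, 1, 2, 3], ![1, op 1 1, op 1 2, op 1 3], ![2, op 2 1, op 2 2, op 2 3],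
      ![3, op 3 1, op 3 2, op 3 3]] := by
    funext a b
    fin_cases a <;> fin_cases b <;> simp [hl, hr]
  have key := loop_table (op 1 1) (row0 _ _ (by decide)) (op 1 2) (row0 _ _ (by decide))
    (col0 _ _ (by decide)) (row _ _ _ (by decide)) (op 1 3) (row0 _ _ (by decide))
    (col0 _ _ (by decide)) (row _ _ _ (by decide)) (row _ _ _ (by decide))
    (op 2 1) (row0 _ _ (by decide)) (col0 _ _ (by decide)) (col _ _ _ (by decide))
    (op 2 2) (row0 _ _ (by decide)) (row _ _ _ (by decide)) (col _ _ _ (by decide))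
    (op 2 3) (row0 _ _ (by decide)) (col0 _ _ (by decide)) (row _ _ _ (by decide))
    (row _ _ _ (by decide)) (col _ _ _ (by decide))
    (op 3 1) (row0 _ _ (by decide)) (col0 _ _ (by decide)) (col _ _ _ (by decide))
    (col _ _ _ (by decide))
    (op 3 2) (row0 _ _ (by decide)) (col0 _ _ (by decide)) (row _ _ _ (by decide))
    (col _ _ _ (by decide)) (col _ _ _ (by decide))
    (op 3 3) (row0 _ _ (by decide)) (row _ _ _ (by decide)) (row _ _ _ (by decide))
    (col _ _ _ (by decide)) (col _ _ _ (by decide)) x y z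
  rw [← hop] at key
  exact key

/-- A loop of order 4 is an abelian group. -/
theorem loop_comm_and_right_comm (op : Fin 4 → Fin 4 → Fin 4) (e : Fin 4) (hl : ∀ a, op e a = a)
    (hr : ∀ a, op a e = a) (il : ∀ a, Function.Injective (op a))
    (ir : ∀ b, Function.Injective fun a => op a b) (x y z : Fin 4) :
    op x y = op y x ∧ op (op x y) z = op (op x z) y := by
  let s : Equiv.Perm (Fin 4) := Equiv.swap 0 e
  have s0 : s 0 = e := Equiv.swap_apply_left 0 e
  have ss : ∀ a, s (s a) = a := Equiv.swap_apply_self 0 e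
  have key := loop_zero (fun a b => s (op (s a) (s b))) (by simp [s0, hl, ss])
    (by simp [s0, hr, ss]) (fun a => s.injective.comp ((il (s a)).comp s.injective))
    (fun b => s.injective.comp ((ir (s b)).comp s.injective)) (s x) (s y) (s z)
  simpa [ss] using key

theorem eq_of_merges_same {S : Type*} [Finite S] {p q : S → S → S → S} (o : S)
    (ip : TernaryInjective p) (hp : Merges p) (hq : Merges q)
    (h2 : ∀ x z, p x o z = q x o z) (h3 : ∀ x y, p x y o = q x y o) : p = q := by
  funext x y z
  obtain ⟨x', hx'⟩ := (Finite.injective_iff_surjective.mp (ip.1 o o)) (p x y o)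
  have hx : p x' o o = p x y o := hx'
  rw [← hp _ _ _ _ o z hx, h2]
  exact hq _ _ _ _ o z (by rw [← h2, ← h3, hx])

theorem eq_of_merges_distinct {p q : Fin 4 → Fin 4 → Fin 4 → Fin 4} (o : Fin 4)
    (ip : TernaryInjective p) (hp : Merges p) (hq : Merges fun x z y => q x y z)
    (h1 : ∀ y z, p o y z = q o y z) (h2 : ∀ x z, p x o z = q x o z)
    (h3 : ∀ x y, p x y o = q x y o) : p = q := by
  let α := Equiv.ofBijective _ (Finite.injective_iff_bijective.mp (ip.1 o o))
  let β := Equiv.ofBijective _ (Finite.injective_iff_bijective.mp (ip.2.1 o o))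
  let γ := Equiv.ofBijective _ (Finite.injective_iff_bijective.mp (ip.2.2 o o))
  have hα : ∀ a, p (α.symm a) o o = a := α.apply_symm_apply
  have hβ : ∀ a, p o (β.symm a) o = a := β.apply_symm_apply
  have hγ : ∀ a, p o o (γ.symm a) = a := γ.apply_symm_apply
  have eα : α.symm (p o o o) = o := α.symm_apply_apply o
  have eβ : β.symm (p o o o) = o := β.symm_apply_apply o
  let op : Fin 4 → Fin 4 → Fin 4 := fun a b => p (α.symm a) (β.symm b) o
  have loop := loop_comm_and_right_comm op (p o o o) (fun a => by simp [op, eα, hβ])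
    (fun a => by simp [op, eβ, hα]) (fun a => (ip.2.1 _ _).comp β.symm.injective)
    (fun b => (ip.1 _ _).comp α.symm.injective)
  have pmerge : ∀ x y z, p x y z = p (α.symm (p x y o)) o z := fun x y z =>
    hp _ _ _ _ o z (hα _).symm
  have qmerge : ∀ x y z, q x y z = q (α.symm (q x o z)) y o := fun x y z =>
    hq _ _ _ _ o y (by simp only [← h2, hα])
  -- the operation merging the first and third arguments agrees with `op`
  have hop : ∀ a c, p (α.symm a) o (γ.symm c) = op a c := by
    intro a c
    have e1 : p o (β.symm a) (γ.symm c) = p (α.symm a) o (γ.symm c) := by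
      rw [pmerge o, hβ]
    have e2 : q o (β.symm a) (γ.symm c) = op c a := by
      rw [qmerge o, ← h2, hγ, ← h3]
    rw [← e1, h1, e2, (loop c a a).1]
  funext x y z
  obtain ⟨a, rfl⟩ := α.symm.surjective x
  obtain ⟨b, rfl⟩ := β.symm.surjective y
  obtain ⟨c, rfl⟩ := γ.symm.surjective z
  rw [pmerge, hop, qmerge, ← h2, hop, ← h3]
  exact (loop a b c).2

/-- A ternary quasigroup of order 4 with mergeable arguments is determined by its binary
retracts through a given point. -/
theorem eq_of_someMerge {p q : Fin 4 → Fin 4 → Fin 4 → Fin 4} (o : Fin 4)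
    (ip : TernaryInjective p) (iq : TernaryInjective q) (hp : SomeMerge p) (hq : SomeMerge q)
    (h1 : ∀ y z, p o y z = q o y z) (h2 : ∀ x z, p x o z = q x o z)
    (h3 : ∀ x y, p x y o = q x y o) : p = q := by
  have flip : ∀ {r : Fin 4 → Fin 4 → Fin 4 → Fin 4}, Merges r → Merges fun y x z => r x y z :=
    fun h _ _ _ _ => h _ _ _ _
  obtain ⟨i1, i2, i3⟩ := ip
  obtain ⟨j1, j2, j3⟩ := iq
  have unperm : ∀ {r s : Fin 4 → Fin 4 → Fin 4 → Fin 4}, (∀ x y z, r x y z = s x y z) → r = s :=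
    fun h => funext fun x => funext fun y => funext fun z => h x y z
  rcases hp with hp | hp | hp <;> rcases hq with hq | hq | hq
  · exact eq_of_merges_same o ⟨i1, i2, i3⟩ hp hq h2 h3
  · exact eq_of_merges_distinct o ⟨i1, i2, i3⟩ hp hq h1 h2 h3
  · have := eq_of_merges_distinct (p := fun y x z => p x y z) (q := fun y x z => q x y z) o
      ⟨fun a b => i2 a b, fun a b => i1 a b, fun a b => i3 b a⟩ (flip hp) hq h2 h1
      fun a b => h3 b a
    exact unperm fun x y z => congrFun₃ this y x z
  · exact (eq_of_merges_distinct o ⟨j1, j2, j3⟩ hq hp (fun a b => (h1 a b).symm)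
      (fun a b => (h2 a b).symm) fun a b => (h3 a b).symm).symm
  · have := eq_of_merges_same (p := fun x z y => p x y z) (q := fun x z y => q x y z) o
      ⟨fun a b => i1 b a, fun a b => i3 a b, fun a b => i2 a b⟩ hp hq h3 h2
    exact unperm fun x y z => congrFun₃ this x z y
  · have := eq_of_merges_distinct (p := fun z x y => p x y z) (q := fun z x y => q x y z) o
      ⟨fun a b => i3 a b, fun a b => i1 b a, fun a b => i2 b a⟩ (flip hp) (flip hq)
      h3 (fun a b => h1 b a) fun a b => h2 b a
    exact unperm fun x y z => congrFun₃ this z x y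
  · have := eq_of_merges_distinct (p := fun y x z => q x y z) (q := fun y x z => p x y z) o
      ⟨fun a b => j2 a b, fun a b => j1 a b, fun a b => j3 b a⟩ (flip hq) hp
      (fun a b => (h2 a b).symm) (fun a b => (h1 a b).symm) fun a b => (h3 b a).symm
    exact unperm fun x y z => (congrFun₃ this y x z).symm
  · have := eq_of_merges_distinct (p := fun z x y => q x y z) (q := fun z x y => p x y z) o
      ⟨fun a b => j3 a b, fun a b => j1 b a, fun a b => j2 b a⟩ (flip hq) (flip hp)
      (fun a b => (h3 a b).symm) (fun a b => (h1 b a).symm) fun a b => (h2 b a).symm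
    exact unperm fun x y z => (congrFun₃ this z x y).symm
  · have := eq_of_merges_same (p := fun y z x => p x y z) (q := fun y z x => q x y z) o
      ⟨fun a b => i2 b a, fun a b => i3 b a, fun a b => i1 a b⟩ hp hq (fun a b => h3 b a) h1
    exact unperm fun x y z => congrFun₃ this y z x

/-- An edge colouring without rainbow triangles and without two-coloured `K₄`s both of whose
colour classes are paths has a monochromatic cut. -/
theorem exists_monochromatic_split {V C : Type*} [DecidableEq V] (μ : V → V → C)
    (symm : ∀ a b, a ≠ b → μ a b = μ b a)
    (tri : ∀ a b c, a ≠ b → a ≠ c → b ≠ c → μ a b = μ a c ∨ μ a b = μ b c ∨ μ a c = μ b c)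
    (path : ∀ z x v y, z ≠ x → z ≠ v → z ≠ y → x ≠ v → x ≠ y → v ≠ y →
      μ z x = μ x v → μ x v = μ v y → μ z v = μ z y → μ z y = μ x y → μ z x = μ z v)
    (U : Finset V) (hU : 2 ≤ U.card) :
    ∃ A B : Finset V, A.Nonempty ∧ B.Nonempty ∧ Disjoint A B ∧ A ∪ B = U ∧
      ∃ c, ∀ a ∈ A, ∀ b ∈ B, μ a b = c := by
  induction U using Finset.induction_on with
  | empty => simp at hU
  | insert v U hv ih =>
    have hne : ∀ w ∈ U, v ≠ w := fun w hw h => hv (h ▸ hw)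
    rw [Finset.card_insert_of_notMem hv] at hU
    rcases (show U.card = 1 ∨ 2 ≤ U.card by omega) with h1 | h2
    · obtain ⟨u, rfl⟩ := Finset.card_eq_one.mp h1
      exact ⟨{v}, {u}, by simp, by simp, by simpa using hv, rfl, μ v u, by simp⟩
    obtain ⟨A, B, hA, hB, hAB, rfl, c, hc⟩ := ih h2
    -- a proper part of `A ∪ B` that has colour `c` to everything else can be split off
    have split : ∀ D : Finset V, D.Nonempty → D ⊆ A ∪ B →
        (∀ a ∈ D, ∀ b ∈ A ∪ B, b ∉ D → μ a b = c) → (∀ a ∈ D, μ v a = c) →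
        ∃ A' B' : Finset V, A'.Nonempty ∧ B'.Nonempty ∧ Disjoint A' B' ∧
          A' ∪ B' = insert v (A ∪ B) ∧ ∃ c, ∀ a ∈ A', ∀ b ∈ B', μ a b = c := by
      intro D hD hsub hcut hvD
      refine ⟨D, insert v ((A ∪ B) \ D), hD, by simp, ?_, ?_, c, ?_⟩
      · rw [Finset.disjoint_left]
        intro a ha hb
        rcases Finset.mem_insert.mp hb with rfl | hb
        · exact hv (hsub ha)
        · exact (Finset.mem_sdiff.mp hb).2 ha
      · rw [Finset.union_insert, Finset.union_sdiff_of_subset hsub]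
      · intro a ha b hb
        rcases Finset.mem_insert.mp hb with rfl | hb
        · rw [← symm _ _ (hne a (hsub ha)), hvD a ha]
        · exact hcut a ha b (Finset.mem_sdiff.mp hb).1 (Finset.mem_sdiff.mp hb).2
    -- the argument below is symmetric in the two sides of the split
    have side : ∀ A' B' : Finset V, A' ∪ B' = A ∪ B → Disjoint A' B' →
        (∀ a ∈ A', ∀ b ∈ B', μ a b = c) → ∀ y ∈ B', μ v y ≠ c → ∀ z ∈ A', μ v z = c →
        ∃ A' B' : Finset V, A'.Nonempty ∧ B'.Nonempty ∧ Disjoint A' B' ∧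
          A' ∪ B' = insert v (A ∪ B) ∧ ∃ c, ∀ a ∈ A', ∀ b ∈ B', μ a b = c := by
      intro A' B' hU' hdis hcut y hy hvy z hz hvz
      classical
      let R : V → V → Prop := fun a b => a ∈ A' ∧ b ∈ A' ∧ a ≠ b ∧ μ a b ≠ c
      let D := A'.filter fun a => Relation.ReflTransGen R z a
      have hsubA : D ⊆ A' := Finset.filter_subset _ _
      have hzD : z ∈ D := Finset.mem_filter.mpr ⟨hz, .refl⟩
      have hA'U : ∀ a ∈ A', a ∈ A ∪ B := fun a ha => hU' ▸ Finset.mem_union_left _ ha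
      have hB'U : ∀ a ∈ B', a ∈ A ∪ B := fun a ha => hU' ▸ Finset.mem_union_right _ ha
      have hdne : ∀ a ∈ A', ∀ b ∈ B', a ≠ b := fun a ha b hb h =>
        Finset.disjoint_left.mp hdis ha (h ▸ hb)
      refine split D ⟨z, hzD⟩ (fun a ha => hA'U a (hsubA ha)) ?_ ?_
      · intro a ha b hb hbD
        rw [← hU'] at hb
        rcases Finset.mem_union.mp hb with hb | hb
        · by_contra hab
          refine hbD (Finset.mem_filter.mpr ⟨hb, (Finset.mem_filter.mp ha).2.tail
            ⟨hsubA ha, hb, ?_, hab⟩⟩)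
          rintro rfl
          exact hbD ha
        · exact hcut a (hsubA ha) b hb
      · intro a ha
        have hreach := (Finset.mem_filter.mp ha).2
        clear ha
        induction hreach with
        | refl => exact hvz
        | @tail s x _ hsx ihs =>
          obtain ⟨hs, hx, hne', hcol⟩ := hsx
          by_contra hvx
          have vs := hne s (hA'U s hs)
          have vx := hne x (hA'U x hx)
          have vy := hne y (hB'U y hy)
          have sy := hdne s hs y hy
          have xy := hdne x hx y hy
          have e1 := hcut s hs y hy
          have e2 := hcut x hx y hy
          have e3 : μ v x = μ v y := by
            rcases tri v x y vx vy xy with h | h | h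
            · exact h
            · exact absurd (h.trans e2) hvx
            · exact absurd (h.trans e2) hvy
          have e4 : μ v x = μ s x := by
            rcases tri v s x vs vx hne' with h | h | h
            · exact absurd (h.symm.trans ihs) hvx
            · exact absurd (h.symm.trans ihs) hcol
            · exact h
          have := path s x v y hne' vs.symm sy vx.symm xy vy
            (by rw [← e4, symm _ _ vx]) (by rw [← symm _ _ vx, e3])
            (by rw [← symm _ _ vs, ihs, e1]) (by rw [e1, e2])
          exact hcol (by rw [this, ← symm _ _ vs, ihs])
    have hcBA : ∀ a ∈ B, ∀ b ∈ A, μ a b = c := fun a ha b hb => by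
      rw [symm a b fun h => Finset.disjoint_left.mp hAB hb (h ▸ ha), hc b hb a ha]
    by_cases hvA : ∀ a ∈ A, μ v a = c
    · exact split A hA Finset.subset_union_left (fun a ha b hb hbA =>
        hc a ha b ((Finset.mem_union.mp hb).resolve_left hbA)) hvA
    by_cases hvB : ∀ b ∈ B, μ v b = c
    · exact split B hB Finset.subset_union_right (fun a ha b hb hbB =>
        hcBA a ha b ((Finset.mem_union.mp hb).resolve_right hbB)) hvB
    push Not at hvA hvB
    obtain ⟨x, hx, hvx⟩ := hvA
    obtain ⟨y, hy, hvy⟩ := hvB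
    by_cases hz : ∃ z ∈ A ∪ B, μ v z = c
    · obtain ⟨z, hz, hvz⟩ := hz
      rcases Finset.mem_union.mp hz with hz | hz
      · exact side A B rfl hAB hc y hy hvy z hz hvz
      · exact side B A (Finset.union_comm _ _) hAB.symm hcBA x hx hvx z hz hvz
    · push Not at hz
      have hcross : ∀ a ∈ A, ∀ b ∈ B, μ v a = μ v b := by
        intro a ha b hb
        have haU := Finset.mem_union_left B ha
        have hbU := Finset.mem_union_right A hb
        have e := hc a ha b hb
        rcases tri v a b (hne a haU) (hne b hbU)
          (fun h => Finset.disjoint_left.mp hAB ha (h ▸ hb)) with h | h | h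
        · exact h
        · exact absurd (h.trans e) (hz a haU)
        · exact absurd (h.trans e) (hz b hbU)
      refine ⟨{v}, A ∪ B, by simp, hA.mono Finset.subset_union_left, by simpa using hv, rfl,
        μ v y, ?_⟩
      intro a ha b hb
      rw [Finset.mem_singleton] at ha
      subst ha
      rcases Finset.mem_union.mp hb with hb | hb
      · exact hcross b hb y hy
      · rw [← hcross x hx b hb, hcross x hx y hy]

/-- Such an edge colouring has two vertices that no third vertex distinguishes. -/
theorem exists_twins {V C : Type*} [DecidableEq V] (μ : V → V → C)
    (symm : ∀ a b, a ≠ b → μ a b = μ b a)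
    (tri : ∀ a b c, a ≠ b → a ≠ c → b ≠ c → μ a b = μ a c ∨ μ a b = μ b c ∨ μ a c = μ b c)
    (path : ∀ z x v y, z ≠ x → z ≠ v → z ≠ y → x ≠ v → x ≠ y → v ≠ y →
      μ z x = μ x v → μ x v = μ v y → μ z v = μ z y → μ z y = μ x y → μ z x = μ z v)
    (U : Finset V) (hU : 2 ≤ U.card) :
    ∃ i ∈ U, ∃ j ∈ U, i ≠ j ∧ ∀ k ∈ U, k ≠ i → k ≠ j → μ i k = μ j k := by
  induction U using Finset.strongInduction with
  | H U ih =>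
    obtain ⟨A, B, hA, hB, hAB, rfl, c, hc⟩ := exists_monochromatic_split μ symm tri path U hU
    have hcBA : ∀ a ∈ B, ∀ b ∈ A, μ a b = c := fun a ha b hb => by
      rw [symm a b fun h => Finset.disjoint_left.mp hAB hb (h ▸ ha), hc b hb a ha]
    have part : ∀ D E : Finset V, D ⊂ A ∪ B → D ∪ E = A ∪ B → (∀ a ∈ D, ∀ b ∈ E, μ a b = c) →
        2 ≤ D.card → ∃ i ∈ A ∪ B, ∃ j ∈ A ∪ B, i ≠ j ∧
          ∀ k ∈ A ∪ B, k ≠ i → k ≠ j → μ i k = μ j k := by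
      intro D E hD hDE hcut hcard
      obtain ⟨i, hi, j, hj, hij, h⟩ := ih D hD hcard
      refine ⟨i, hD.1 hi, j, hD.1 hj, hij, fun k hk hki hkj => ?_⟩
      rw [← hDE] at hk
      rcases Finset.mem_union.mp hk with hk | hk
      · exact h k hk hki hkj
      · rw [hcut i hi k hk, hcut j hj k hk]
    by_cases h2A : 2 ≤ A.card
    · refine part A B ?_ rfl hc h2A
      obtain ⟨b, hb⟩ := hB
      exact Finset.ssubset_iff_of_subset Finset.subset_union_left |>.mpr
        ⟨b, Finset.mem_union_right _ hb, Finset.disjoint_right.mp hAB hb⟩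
    by_cases h2B : 2 ≤ B.card
    · refine part B A ?_ (Finset.union_comm _ _) hcBA h2B
      obtain ⟨a, ha⟩ := hA
      exact Finset.ssubset_iff_of_subset Finset.subset_union_right |>.mpr
        ⟨a, Finset.mem_union_left _ ha, Finset.disjoint_left.mp hAB ha⟩
    have hA1 := hA.card_pos
    have hB1 := hB.card_pos
    obtain ⟨a, rfl⟩ := Finset.card_eq_one.mp (show A.card = 1 by omega)
    obtain ⟨b, rfl⟩ := Finset.card_eq_one.mp (show B.card = 1 by omega)
    refine ⟨a, by simp, b, by simp, by simpa using hAB, fun k hk hka hkb => ?_⟩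
    simp only [Finset.mem_union, Finset.mem_singleton] at hk
    exact (hk.elim hka hkb).elim

/-- The value of `p` on two points that differ only inside `A` being equal does not depend on the
arguments outside `A`. -/
def Separates {N : ℕ} {S : Type*} (p : (Fin N → S) → S) (A : Finset (Fin N)) : Prop :=
  ∀ x y x' y', (∀ k ∉ A, x k = y k) → p x = p y → (∀ k ∈ A, x' k = x k) →
    (∀ k ∈ A, y' k = y k) → (∀ k ∉ A, x' k = y' k) → p x' = p y'

theorem exists_separates {N : ℕ} {S : Type*} {p : (Fin N → S) → S} (hp : PermutablyReducible p) :
    ∃ A : Finset (Fin N), 2 ≤ A.card ∧ A.card ≤ N - 1 ∧ Separates p A := by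
  obtain ⟨m, hm, hmN, σ, g, h, -, hh, hfac⟩ := hp
  have hinj : ∀ a b t, h (Fin.cons a t) = h (Fin.cons b t) → a = b := by
    intro a b t hab
    refine (hh 0 (Fin.cons a t)).1 ?_
    simpa only [Fin.update_cons_zero] using hab
  let A := (Finset.univ.filter fun k : Fin N => k.val < m).map σ.toEmbedding
  have hmem : ∀ k : Fin N, σ k ∈ A ↔ k.val < m := by simp [A]
  have hcard : A.card = m := by
    rw [Finset.card_map, Fin.card_filter_val_lt]
    omega
  refine ⟨A, by omega, by omega, fun x y x' y' hxy hpxy hx hy hxy' => ?_⟩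
  rw [hfac, hfac] at hpxy ⊢
  have out : ∀ j : Fin (N - m), ∀ hj, σ ⟨m + j.val, hj⟩ ∉ A := fun j hj => by simp [hmem]
  have inn : ∀ k : Fin m, ∀ hk, σ ⟨k.val, hk⟩ ∈ A := fun k hk => by simp [hmem]
  have e1 := funext fun j : Fin (N - m) => hxy _ (out j (by omega))
  have e2 := funext fun j : Fin (N - m) => hxy' _ (out j (by omega))
  have e3 := funext fun k : Fin m => hx _ (inn k (by omega))
  have e4 := funext fun k : Fin m => hy _ (inn k (by omega))
  rw [e1] at hpxy
  rw [e2, e3, e4, hinj _ _ _ hpxy]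

theorem extend_comp_eq {n k : ℕ} {S : Type*} {ι : Fin k → Fin n} (hι : Function.Injective ι)
    {c x : Fin n → S} (h : ∀ t, (∀ a, ι a ≠ t) → x t = c t) :
    Function.extend ι (x ∘ ι) c = x := by
  funext t
  by_cases ht : ∃ a, ι a = t
  · obtain ⟨a, rfl⟩ := ht
    rw [hι.extend_apply, Function.comp_apply]
  · rw [Function.extend_apply' _ _ _ ht, h t fun a ha => ht ⟨a, ha⟩]

theorem Separates.of_retract {n k : ℕ} {S : Type*} {f : (Fin n → S) → S} {ι : Fin k → Fin n}
    (hι : Function.Injective ι) {c : Fin n → S} {A : Finset (Fin k)}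
    (hA : Separates (PrincipalRetract f ι c) A) {x y x' y' : Fin n → S}
    (hx : ∀ t, (∀ a, ι a ≠ t) → x t = c t) (hy : ∀ t, (∀ a, ι a ≠ t) → y t = c t)
    (hx' : ∀ t, (∀ a, ι a ≠ t) → x' t = c t) (hy' : ∀ t, (∀ a, ι a ≠ t) → y' t = c t)
    (h1 : ∀ a ∉ A, x (ι a) = y (ι a)) (h2 : f x = f y) (h3 : ∀ a ∈ A, x' (ι a) = x (ι a))
    (h4 : ∀ a ∈ A, y' (ι a) = y (ι a)) (h5 : ∀ a ∉ A, x' (ι a) = y' (ι a)) : f x' = f y' := by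
  have := hA (x ∘ ι) (y ∘ ι) (x' ∘ ι) (y' ∘ ι) h1
  simp only [PrincipalRetract, extend_comp_eq hι hx, extend_comp_eq hι hy,
    extend_comp_eq hι hx', extend_comp_eq hι hy'] at this
  exact this h2 h3 h4 h5

theorem principalRetract_principalRetract {n k l : ℕ} {S : Type*} (f : (Fin n → S) → S)
    {ι : Fin k → Fin n} (hι : Function.Injective ι) (c : Fin n → S) {κ : Fin l → Fin k}
    (hκ : Function.Injective κ) (d : Fin k → S) :
    PrincipalRetract (PrincipalRetract f ι c) κ d =
      PrincipalRetract f (ι ∘ κ) (Function.extend ι d c) := by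
  funext y
  refine congrArg f (funext fun t => ?_)
  by_cases ht : ∃ a, ι a = t
  · obtain ⟨a, rfl⟩ := ht
    rw [hι.extend_apply]
    by_cases ha : ∃ b, κ b = a
    · obtain ⟨b, rfl⟩ := ha
      rw [hκ.extend_apply, ← Function.comp_apply (f := ι), (hι.comp hκ).extend_apply]
    · rw [Function.extend_apply' _ _ _ ha, Function.extend_apply', hι.extend_apply]
      rintro ⟨b, hb⟩
      exact ha ⟨b, hι hb⟩
  · rw [Function.extend_apply' _ _ _ ht, Function.extend_apply', Function.extend_apply' _ _ _ ht]
    rintro ⟨b, hb⟩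
    exact ht ⟨κ b, hb⟩

theorem isNQuasigroup_principalRetract {n k : ℕ} {S : Type*} {f : (Fin n → S) → S}
    (hf : IsNQuasigroup f) {ι : Fin k → Fin n} (hι : Function.Injective ι) (c : Fin n → S) :
    IsNQuasigroup (PrincipalRetract f ι c) := by
  intro i x
  have h : ∀ a, Function.extend ι (Function.update x i a) c =
      Function.update (Function.extend ι x c) (ι i) a := by
    intro a
    funext t
    by_cases ht : ∃ b, ι b = t
    · obtain ⟨b, rfl⟩ := ht
      simp only [hι.extend_apply, Function.update_apply, hι.eq_iff]
    · rw [Function.extend_apply' _ _ _ ht, Function.update_of_ne fun h => ht ⟨i, h.symm⟩,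
        Function.extend_apply' _ _ _ ht]
  simpa only [PrincipalRetract, h] using hf (ι i) (Function.extend ι x c)

theorem someMerge_of_retract {n : ℕ} {S : Type*} {f : (Fin n → S) → S} {i j k : Fin n}
    (hij : i ≠ j) (hik : i ≠ k) (hjk : j ≠ k) (c : Fin n → S)
    (h : PermutablyReducible (PrincipalRetract f ![i, j, k] c)) :
    SomeMerge fun x y z =>
      f (Function.update (Function.update (Function.update c i x) j y) k z) := by
  have hι : Function.Injective ![i, j, k] := by
    intro a b
    fin_cases a <;> fin_cases b <;> simp [hij, hik, hjk, hij.symm, hik.symm, hjk.symm]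
  obtain ⟨A, hA2, hA3, hA⟩ := exists_separates h
  have hcases : ∀ A : Finset (Fin 3), 2 ≤ A.card → A.card ≤ 3 - 1 →
      A = {0, 1} ∨ A = {0, 2} ∨ A = {1, 2} := by decide
  have off : ∀ x y z t, (∀ a, ![i, j, k] a ≠ t) →
      Function.update (Function.update (Function.update c i x) j y) k z t = c t := by
    intro x y z t ht
    have h0 : i ≠ t := ht 0
    have h1 : j ≠ t := ht 1
    have h2 : k ≠ t := ht 2
    simp [h0.symm, h1.symm, h2.symm]
  rcases hcases A hA2 hA3 with rfl | rfl | rfl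
  · refine Or.inl fun x y x' y' z z' he => ?_
    refine hA.of_retract hι (off _ _ _) (off _ _ _) (off _ _ _) (off _ _ _) ?_ he ?_ ?_ ?_ <;>
      simp [Fin.forall_fin_succ, Function.update_apply, hij, hik, hjk]
  · refine Or.inr (Or.inl fun x y x' y' z z' he => ?_)
    refine hA.of_retract hι (off _ _ _) (off _ _ _) (off _ _ _) (off _ _ _) ?_ he ?_ ?_ ?_ <;>
      simp [Fin.forall_fin_succ, Function.update_apply, hij, hik, hjk]
  · refine Or.inr (Or.inr fun x y x' y' z z' he => ?_)
    refine hA.of_retract hι (off _ _ _) (off _ _ _) (off _ _ _) (off _ _ _) ?_ he ?_ ?_ ?_ <;>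
      simp [Fin.forall_fin_succ, Function.update_apply, hij, hik, hjk]

/-- The colour of the pair `i, j`: the binary retract in the places `i`, `j` through `0`, with the
arguments relabelled by `s` so that it becomes a loop. -/
def color {n : ℕ} (f : (Fin n → Fin 4) → Fin 4) (s : Fin n → Equiv.Perm (Fin 4)) (i j : Fin n)
    (a b : Fin 4) : Fin 4 :=
  f (Function.update (Function.update (fun _ => 0) i (s i a)) j (s j b))

section

variable {n : ℕ} {f : (Fin n → Fin 4) → Fin 4} {s : Fin n → Equiv.Perm (Fin 4)}

theorem color_symm (hq : IsNQuasigroup f)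
    (hs : ∀ i a, f (Function.update (fun _ => 0) i (s i a)) = a) {i j : Fin n} (hij : i ≠ j) :
    color f s i j = color f s j i := by
  have s0 : ∀ i, s i (f fun _ => 0) = 0 := fun i => by
    apply (hq i fun _ => 0).1
    simp only [hs]
    exact congrArg f (Function.update_eq_self i _).symm
  funext a b
  have hflip : ∀ a b, color f s i j a b = color f s j i b a := fun a b => by
    rw [color, color, Function.update_comm hij]
  have hzero : ∀ i : Fin n, Function.update (fun _ => (0 : Fin 4)) i 0 = fun _ => 0 := fun i =>
    Function.update_eq_self i _
  refine (loop_comm_and_right_comm (color f s i j) (f fun _ => 0) ?_ ?_ ?_ ?_ a b a).1.trans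
    (hflip b a)
  · intro a
    rw [color, s0, hzero, hs]
  · intro a
    rw [hflip, color, s0, hzero, hs]
  · exact fun a => (hq j _).1.comp (s j).injective
  · intro b
    simp only [hflip]
    exact (hq i _).1.comp (s i).injective

theorem color_eq_of_separates (hs : ∀ i a, f (Function.update (fun _ => 0) i (s i a)) = a) {k : ℕ}
    {ι : Fin k → Fin n} (hι : Function.Injective ι) {A : Finset (Fin k)}
    (hA : Separates (PrincipalRetract f ι fun _ => 0) A) {p q r : Fin k} (hp : p ∈ A) (hqA : q ∈ A)
    (hr : r ∉ A) : color f s (ι p) (ι r) = color f s (ι q) (ι r) := by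
  funext a b
  have off1 : ∀ (p : Fin k) (a : Fin 4) (t : Fin n), (∀ a, ι a ≠ t) →
      Function.update (fun _ => (0 : Fin 4)) (ι p) a t = 0 := fun p a t ht => by
    rw [Function.update_of_ne (ht p).symm]
  have off2 : ∀ (p : Fin k) (a b : Fin 4) (t : Fin n), (∀ a, ι a ≠ t) →
      Function.update (Function.update (fun _ => (0 : Fin 4)) (ι p) a) (ι r) b t = 0 := by
    intro p a b t ht
    rw [Function.update_of_ne (ht r).symm, off1 p a t ht]
  have ne : ∀ {a b}, a ∈ A → b ∉ A → ι b ≠ ι a := fun ha hb h => hb (hι h ▸ ha)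
  refine hA.of_retract hι (off1 p (s (ι p) a)) (off1 q (s (ι q) a)) (off2 p _ _) (off2 q _ _) ?_
    (by rw [hs, hs]) ?_ ?_ ?_
  · intro t ht
    rw [Function.update_of_ne (ne hp ht), Function.update_of_ne (ne hqA ht)]
  · intro t ht
    rw [Function.update_of_ne (ne ht hr).symm]
  · intro t ht
    rw [Function.update_of_ne (ne ht hr).symm]
  · intro t ht
    simp [Function.update_apply, ne hp ht, ne hqA ht]

theorem color_triangle (hs : ∀ i a, f (Function.update (fun _ => 0) i (s i a)) = a)
    (hq : IsNQuasigroup f) (h3 : ∀ ι : Fin 3 → Fin n, Function.Injective ι →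
      ∀ c : Fin n → Fin 4, PermutablyReducible (PrincipalRetract f ι c))
    (a b c : Fin n) (hab : a ≠ b) (hac : a ≠ c) (hbc : b ≠ c) :
    color f s a b = color f s a c ∨ color f s a b = color f s b c ∨
      color f s a c = color f s b c := by
  have hι : Function.Injective ![a, b, c] := by
    intro i j
    fin_cases i <;> fin_cases j <;> simp [hab, hac, hbc, hab.symm, hac.symm, hbc.symm]
  obtain ⟨A, hA2, hA3, hA⟩ := exists_separates (h3 _ hι fun _ => 0)
  have hcases : ∀ A : Finset (Fin 3), 2 ≤ A.card → A.card ≤ 3 - 1 →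
      (1 ∈ A ∧ 2 ∈ A ∧ 0 ∉ A) ∨ (0 ∈ A ∧ 2 ∈ A ∧ 1 ∉ A) ∨ (0 ∈ A ∧ 1 ∈ A ∧ 2 ∉ A) := by decide
  rcases hcases A hA2 hA3 with ⟨h, h', h''⟩ | ⟨h, h', h''⟩ | ⟨h, h', h''⟩
  · have : color f s b a = color f s c a := color_eq_of_separates hs hι hA h h' h''
    rw [color_symm hq hs hab, this, color_symm hq hs hac]
    exact Or.inl rfl
  · have : color f s a b = color f s c b := color_eq_of_separates hs hι hA h h' h''
    rw [this, color_symm hq hs hbc]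
    exact Or.inr (Or.inl rfl)
  · exact Or.inr (Or.inr (color_eq_of_separates hs hι hA h h' h''))

theorem color_path (hs : ∀ i a, f (Function.update (fun _ => 0) i (s i a)) = a)
    (hq : IsNQuasigroup f) (h4 : ∀ ι : Fin 4 → Fin n, Function.Injective ι →
      ∀ c : Fin n → Fin 4, PermutablyReducible (PrincipalRetract f ι c))
    (z x v y : Fin n) (zx : z ≠ x) (zv : z ≠ v) (zy : z ≠ y) (xv : x ≠ v) (xy : x ≠ y)
    (vy : v ≠ y) (e1 : color f s z x = color f s x v) (e2 : color f s x v = color f s v y)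
    (e3 : color f s z v = color f s z y) (e4 : color f s z y = color f s x y) :
    color f s z x = color f s z v := by
  have hι : Function.Injective ![z, x, v, y] := by
    intro i j
    fin_cases i <;> fin_cases j <;>
      simp [zx, zv, zy, xv, xy, vy, zx.symm, zv.symm, zy.symm, xv.symm, xy.symm, vy.symm]
  obtain ⟨A, hA2, hA3, hA⟩ := exists_separates (h4 _ hι fun _ => 0)
  let adj : Fin 4 → Fin 4 → Prop := fun a b => a.val + 1 = b.val ∨ b.val + 1 = a.val
  have hcol : ∀ a b, a ≠ b → color f s (![z, x, v, y] a) (![z, x, v, y] b) =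
      if adj a b then color f s z x else color f s z v := by
    have c1 := color_symm hq hs zx
    have c2 := color_symm hq hs zv
    have c3 := color_symm hq hs zy
    have c4 := color_symm hq hs xv
    have c5 := color_symm hq hs xy
    have c6 := color_symm hq hs vy
    intro a b hab
    fin_cases a <;> fin_cases b <;> simp [adj] at hab ⊢ <;> simp_all
  have hcases : ∀ A : Finset (Fin 4), 2 ≤ A.card → A.card ≤ 4 - 1 →
      ∃ p ∈ A, ∃ q ∈ A, ∃ r ∉ A, (p.val + 1 = r.val ∨ r.val + 1 = p.val) ∧
        ¬ (q.val + 1 = r.val ∨ r.val + 1 = q.val) := by decide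
  obtain ⟨p, hp, q, hqA, r, hr, hpr, hqr⟩ := hcases A hA2 hA3
  have := color_eq_of_separates hs hι hA hp hqA hr
  rw [hcol p r fun h => hr (h ▸ hp), hcol q r fun h => hr (h ▸ hqA)] at this
  rwa [if_pos hpr, if_neg hqr] at this

theorem ternaryInjective_update (hq : IsNQuasigroup f) {i j k : Fin n} (hij : i ≠ j) (hik : i ≠ k)
    (hjk : j ≠ k) (c : Fin n → Fin 4) : TernaryInjective fun x y z =>
      f (Function.update (Function.update (Function.update c i x) j y) k z) := by
  refine ⟨fun y z => ?_, fun x z => ?_, fun x y => (hq k _).1⟩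
  · simp only [Function.update_comm hij, Function.update_comm hik]
    exact (hq i _).1
  · simp only [Function.update_comm hjk]
    exact (hq j _).1

theorem card_support_lt {x y : Fin n → Fin 4} (h : ∀ t, x t = 0 → y t = 0) {j : Fin n}
    (hx : x j ≠ 0) (hy : y j = 0) :
    (Finset.univ.filter fun t => y t ≠ 0).card < (Finset.univ.filter fun t => x t ≠ 0).card := by
  refine Finset.card_lt_card (Finset.ssubset_iff_of_subset ?_ |>.mpr ⟨j, by simpa, by simpa⟩)
  intro t
  simpa using mt (h t)

/-- If `i` and `j` are twins for the colouring, an argument in place `j` can be moved to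
place `i`. -/
theorem move_of_twins (hq : IsNQuasigroup f)
    (hs : ∀ i a, f (Function.update (fun _ => 0) i (s i a)) = a)
    (h3 : ∀ ι : Fin 3 → Fin n, Function.Injective ι →
      ∀ c : Fin n → Fin 4, PermutablyReducible (PrincipalRetract f ι c))
    {i j : Fin n} (hij : i ≠ j)
    (twins : ∀ k, k ≠ i → k ≠ j → color f s i k = color f s j k) (x : Fin n → Fin 4)
    (hx : x i = 0) :
    f x = f (Function.update
      (Function.update x i (s i (f (Function.update (fun _ => 0) j (x j))))) j 0) := by
  induction hN : (Finset.univ.filter fun t => x t ≠ 0).card using Nat.strong_induction_on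
    generalizing x with
  | _ N ih =>
  have ih' : ∀ y : Fin n → Fin 4, y i = 0 → (∀ t, x t = 0 → y t = 0) →
      (∃ t, x t ≠ 0 ∧ y t = 0) → f y = f (Function.update
        (Function.update y i (s i (f (Function.update (fun _ => 0) j (y j))))) j 0) := by
    rintro y hyi hy ⟨t, hxt, hyt⟩
    exact ih _ (hN ▸ card_support_lt hy hxt hyt) y hyi rfl
  have hsf : ∀ i a, s i (f (Function.update (fun _ => 0) i a)) = a := fun i a => by
    obtain ⟨b, rfl⟩ := (s i).surjective a
    rw [hs]
  have hupd : ∀ k, x k = 0 → Function.update x k 0 = x := fun k hk => by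
    rw [← hk, Function.update_eq_self]
  by_cases hxj : x j = 0
  · have e : s i (f (Function.update (fun _ => 0) j (x j))) = 0 := by
      have := hsf i 0
      rw [Function.update_eq_self i (fun _ => (0 : Fin 4))] at this
      rw [hxj, Function.update_eq_self j (fun _ => (0 : Fin 4)), this]
    rw [e, hupd i hx, hupd j hxj]
  by_cases hpair : ∃ a b, a ≠ b ∧ a ≠ j ∧ b ≠ j ∧ x a ≠ 0 ∧ x b ≠ 0
  · obtain ⟨a, b, hab, haj, hbj, hxa, hxb⟩ := hpair
    have hai : a ≠ i := fun h => hxa (h ▸ hx)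
    have hbi : b ≠ i := fun h => hxb (h ▸ hx)
    let ψ : Fin 4 → Fin 4 := fun y => s i (f (Function.update (fun _ => 0) j y))
    have hψ : Function.Injective ψ := (s i).injective.comp (hq j _).1
    let P : Fin 4 → Fin 4 → Fin 4 → Fin n → Fin 4 := fun y u v =>
      Function.update (Function.update (Function.update x j y) a u) b v
    let Q : Fin 4 → Fin 4 → Fin 4 → Fin n → Fin 4 := fun w u v =>
      Function.update (Function.update (Function.update (Function.update x j 0) i w) a u) b v
    have inj := ternaryInjective_update hq hai.symm hbi.symm hab (Function.update x j 0)
    have merge := someMerge_of_retract hai.symm hbi.symm hab (Function.update x j 0)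
      (h3 ![i, a, b] (by
        intro p q
        fin_cases p <;> fin_cases q <;> simp [hai, hbi, hab, hai.symm, hbi.symm, hab.symm]) _)
    have agree : ∀ y u v, (y = 0 ∨ u = 0 ∨ v = 0) → f (P y u v) = f (Q (ψ y) u v) := by
      intro y u v h0
      rw [ih' (P y u v) (by clear ih ih'; grind [Function.update_apply])
        (by clear ih ih'; grind [Function.update_apply])
        (by clear ih ih'; grind [Function.update_apply])]
      have : P y u v j = y := by clear ih ih'; grind [Function.update_apply]
      rw [this]
      refine congrArg f (funext fun t => ?_)
      clear ih ih'
      grind [Function.update_apply]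
    have key := eq_of_someMerge (p := fun y u v => f (P y u v))
      (q := fun y u v => f (Q (ψ y) u v)) 0 (ternaryInjective_update hq haj.symm hbj.symm hab x)
      ⟨fun u v => (inj.1 u v).comp hψ, fun y v => inj.2.1 (ψ y) v, fun y u => inj.2.2 (ψ y) u⟩
      (someMerge_of_retract haj.symm hbj.symm hab x (h3 ![j, a, b] (by
        intro p q
        fin_cases p <;> fin_cases q <;> simp [haj, hbj, hab, haj.symm, hbj.symm, hab.symm]) _))
      (merge.imp (fun h _ _ _ _ => h _ _ _ _) (Or.imp (fun h _ _ _ _ => h _ _ _ _)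
        fun h _ _ _ _ _ _ => h _ _ _ _ _ _))
      (fun _ _ => agree _ _ _ (by simp)) (fun _ _ => agree _ _ _ (by simp))
      (fun _ _ => agree _ _ _ (by simp))
    have := congrFun₃ key (x j) (x a) (x b)
    refine Eq.trans ?_ (Eq.trans this ?_) <;>
      refine congrArg f (funext fun t => ?_) <;> clear ih ih' <;> grind [Function.update_apply]
  by_cases hone : ∃ a, a ≠ j ∧ x a ≠ 0
  · obtain ⟨a, haj, hxa⟩ := hone
    have hai : a ≠ i := fun h => hxa (h ▸ hx)
    have := congrFun₂ (twins a hai haj) (f (Function.update (fun _ => 0) j (x j)))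
      ((s a).symm (x a))
    simp only [color, hsf, Equiv.apply_symm_apply] at this
    refine Eq.trans ?_ (Eq.trans this.symm ?_) <;>
      refine congrArg f (funext fun t => ?_) <;> clear ih ih' <;> grind [Function.update_apply]
  · refine Eq.trans ?_ (Eq.trans (hs i (f (Function.update (fun _ => 0) j (x j)))).symm ?_) <;>
      refine congrArg f (funext fun t => ?_) <;> clear ih ih' <;> grind [Function.update_apply]

/-- If `i` and `j` are twins for the colouring, the arguments in places `i` and `j` can be
merged. -/
theorem merge_of_twins (hq : IsNQuasigroup f)
    (hs : ∀ i a, f (Function.update (fun _ => 0) i (s i a)) = a)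
    (h3 : ∀ ι : Fin 3 → Fin n, Function.Injective ι →
      ∀ c : Fin n → Fin 4, PermutablyReducible (PrincipalRetract f ι c))
    {i j : Fin n} (hij : i ≠ j)
    (twins : ∀ k, k ≠ i → k ≠ j → color f s i k = color f s j k) (x : Fin n → Fin 4) :
    f x = f (Function.update (Function.update x i
      (s i (f (Function.update (Function.update (fun _ => 0) i (x i)) j (x j))))) j 0) := by
  induction hN : (Finset.univ.filter fun t => x t ≠ 0).card using Nat.strong_induction_on
    generalizing x with
  | _ N ih =>
  let φ : Fin 4 → Fin 4 → Fin 4 := fun a b =>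
    s i (f (Function.update (Function.update (fun _ => 0) i a) j b))
  have ih' : ∀ y : Fin n → Fin 4, (∀ t, x t = 0 → y t = 0) → (∃ t, x t ≠ 0 ∧ y t = 0) →
      f y = f (Function.update (Function.update y i (φ (y i) (y j))) j 0) := by
    rintro y hy ⟨t, hxt, hyt⟩
    exact ih _ (hN ▸ card_support_lt hy hxt hyt) y rfl
  by_cases hxi : x i = 0
  · rw [hxi, Function.update_eq_self i (fun _ => (0 : Fin 4))]
    exact move_of_twins hq hs h3 hij twins x hxi
  have hupd : ∀ k, x k = 0 → Function.update x k 0 = x := fun k hk => by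
    rw [← hk, Function.update_eq_self]
  by_cases hxj : x j = 0
  · have e : s i (f (Function.update (Function.update (fun _ => 0) i (x i)) j (x j))) = x i := by
      have e' : Function.update (Function.update (fun _ => 0) i (x i)) j (x j) =
          Function.update (fun _ => (0 : Fin 4)) i (x i) := by
        funext t
        clear ih ih'
        grind [Function.update_apply]
      obtain ⟨b, hb⟩ := (s i).surjective (x i)
      rw [e', ← hb, hs]
    rw [e, Function.update_eq_self, hupd j hxj]
  by_cases hone : ∃ d, d ≠ i ∧ d ≠ j ∧ x d ≠ 0
  · obtain ⟨d, hdi, hdj, hxd⟩ := hone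
    let P : Fin 4 → Fin 4 → Fin 4 → Fin n → Fin 4 := fun a b c =>
      Function.update (Function.update (Function.update x i a) j b) d c
    let Q : Fin 4 → Fin 4 → Fin n → Fin 4 := fun w c =>
      Function.update (Function.update (Function.update x j 0) i w) d c
    have agree : ∀ a b c, (a = 0 ∨ b = 0 ∨ c = 0) → f (P a b c) = f (Q (φ a b) c) := by
      intro a b c h0
      rw [ih' (P a b c) (by clear ih ih'; grind [Function.update_apply])
        (by clear ih ih'; grind [Function.update_apply])]
      have e1 : P a b c i = a := by clear ih ih'; grind [Function.update_apply]
      have e2 : P a b c j = b := by clear ih ih'; grind [Function.update_apply]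
      rw [e1, e2]
      refine congrArg f (funext fun t => ?_)
      clear ih ih'
      grind [Function.update_apply]
    have Qinj : ∀ c, Function.Injective fun w => f (Q w c) := by
      intro c
      simp only [Q, Function.update_comm hdi.symm]
      exact (hq i _).1
    have key := eq_of_someMerge (p := fun a b c => f (P a b c))
      (q := fun a b c => f (Q (φ a b) c)) 0 (ternaryInjective_update hq hij hdi.symm hdj.symm x)
      ⟨fun b c => (Qinj c).comp ((s i).injective.comp (by
          simp only [Function.update_comm hij]
          exact (hq i _).1)),
        fun a c => (Qinj c).comp ((s i).injective.comp (hq j _).1), fun a b => (hq d _).1⟩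
      (someMerge_of_retract hij hdi.symm hdj.symm x (h3 ![i, j, d] (by
        intro p q
        fin_cases p <;> fin_cases q <;> simp [hdi, hdj, hij, hdi.symm, hdj.symm, hij.symm]) _))
      (Or.inl fun a b a' b' c c' h => by
        have : φ a b = φ a' b' := Qinj c h
        simp only [this])
      (fun _ _ => agree _ _ _ (by simp)) (fun _ _ => agree _ _ _ (by simp))
      (fun _ _ => agree _ _ _ (by simp))
    have := congrFun₃ key (x i) (x j) (x d)
    refine Eq.trans ?_ (Eq.trans this ?_) <;>
      refine congrArg f (funext fun t => ?_) <;> clear ih ih' <;> grind [Function.update_apply]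
  · refine Eq.trans ?_ (Eq.trans (hs i (f (Function.update
      (Function.update (fun _ => 0) i (x i)) j (x j)))).symm ?_) <;>
      refine congrArg f (funext fun t => ?_) <;> clear ih ih' <;> grind [Function.update_apply]

end

theorem exists_perm_zero_one {n : ℕ} (hn : 2 ≤ n) {i j : Fin n} (hij : i ≠ j) :
    ∃ σ : Equiv.Perm (Fin n), σ ⟨0, by omega⟩ = i ∧ σ ⟨1, by omega⟩ = j := by
  let o : Fin n := ⟨0, by omega⟩
  let l : Fin n := ⟨1, by omega⟩
  have hol : o ≠ l := by simp [o, l]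
  have hoj : o ≠ Equiv.swap o i j := by
    intro h
    have := congrArg (Equiv.swap o i) h
    rw [Equiv.swap_apply_self, Equiv.swap_apply_left] at this
    exact hij this
  refine ⟨(Equiv.swap l (Equiv.swap o i j)).trans (Equiv.swap o i), ?_, ?_⟩
  · change Equiv.swap o i (Equiv.swap l (Equiv.swap o i j) o) = i
    rw [Equiv.swap_apply_of_ne_of_ne hol hoj, Equiv.swap_apply_left]
  · change Equiv.swap o i (Equiv.swap l (Equiv.swap o i j) l) = j
    rw [Equiv.swap_apply_left, Equiv.swap_apply_self]

/-- An operation in which two arguments can be merged is permutably reducible. -/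
theorem permutablyReducible_of_merge {n : ℕ} (hn : 3 ≤ n) {S : Type*} {f : (Fin n → S) → S}
    (hq : IsNQuasigroup f) {i j : Fin n} (hij : i ≠ j) (o : S) (φ : S → S → S)
    (hφ : IsBinaryQG φ)
    (h : ∀ x, f x = f (Function.update (Function.update x i (φ (x i) (x j))) j o)) :
    PermutablyReducible f := by
  obtain ⟨σ, h0, h1⟩ := exists_perm_zero_one (by omega) hij
  -- the point whose `j`-th coordinate is `o` and whose other coordinates are listed by `w`
  let pt : (Fin (n - 2 + 1) → S) → Fin n → S := fun w t =>
    if (σ.symm t).val = 1 then o else w ⟨(σ.symm t).val - 1, by omega⟩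
  refine ⟨2, le_rfl, by omega, σ, fun v => φ (v 0) (v 1), fun w => f (pt w), ?_, ?_, ?_⟩
  · intro k x
    fin_cases k
    · simpa using hφ.2 (x 1)
    · simpa using hφ.1 (x 0)
  · intro l w
    let m : Fin n := if l.val = 0 then ⟨0, by omega⟩ else ⟨l.val + 1, by omega⟩
    have hpt : ∀ a, pt (Function.update w l a) = Function.update (pt w) (σ m) a := by
      intro a
      funext t
      obtain ⟨t, rfl⟩ := σ.surjective t
      simp only [pt, Function.update_apply, Equiv.symm_apply_apply, σ.injective.eq_iff]
      by_cases hl : l.val = 0 <;> simp only [m, hl, Fin.ext_iff] <;> grind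
    simpa only [hpt] using hq (σ m) (pt w)
  · intro x
    rw [h x]
    refine congrArg f (funext fun t => ?_)
    obtain ⟨t, rfl⟩ := σ.surjective t
    obtain ⟨t, ht⟩ := t
    simp only [pt, Equiv.symm_apply_apply]
    match t, ht with
    | 0, _ => simp [h0, h1, hij]
    | 1, _ => simp [h1]
    | t + 2, ht =>
      have ne0 : σ ⟨t + 2, ht⟩ ≠ i := by simp [← h0, Fin.ext_iff]
      have ne1 : σ ⟨t + 2, ht⟩ ≠ j := by simp [← h1, Fin.ext_iff]
      rw [Function.update_of_ne ne1, Function.update_of_ne ne0, if_neg (by simp)]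
      have : (⟨t + 2 - 1, by omega⟩ : Fin (n - 2 + 1)) =
          Fin.succ (⟨t, by omega⟩ : Fin (n - 2)) := rfl
      simp only [this, Fin.cons_succ]
      exact congrArg (fun u => x (σ u)) (Fin.ext (by simp [Nat.add_comm]))

theorem permutablyReducible_of_retracts {n : ℕ} (hn : 3 ≤ n) {f : (Fin n → Fin 4) → Fin 4}
    (hq : IsNQuasigroup f)
    (h3 : ∀ ι : Fin 3 → Fin n, Function.Injective ι →
      ∀ c : Fin n → Fin 4, PermutablyReducible (PrincipalRetract f ι c))
    (h4 : ∀ ι : Fin 4 → Fin n, Function.Injective ι →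
      ∀ c : Fin n → Fin 4, PermutablyReducible (PrincipalRetract f ι c)) :
    PermutablyReducible f := by
  let s : Fin n → Equiv.Perm (Fin 4) := fun i => (Equiv.ofBijective _ (hq i fun _ => 0)).symm
  have hs : ∀ i a, f (Function.update (fun _ => 0) i (s i a)) = a := fun i a =>
    (Equiv.ofBijective _ (hq i fun _ => 0)).apply_symm_apply a
  obtain ⟨i, -, j, -, hij, twins⟩ := exists_twins (color f s) (fun a b => color_symm hq hs)
    (color_triangle hs hq h3) (color_path hs hq h4) Finset.univ
    (by rw [Finset.card_univ, Fintype.card_fin]; omega)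
  refine permutablyReducible_of_merge hn hq hij 0
    (fun a b => s i (f (Function.update (Function.update (fun _ => 0) i a) j b))) ⟨?_, ?_⟩
    (merge_of_twins hq hs h3 hij fun k hki hkj => twins k (Finset.mem_univ k) hki hkj)
  · exact fun a => (s i).bijective.comp (hq j _)
  · intro b
    simp only [Function.update_comm hij]
    exact (s i).bijective.comp (hq i _)

end OrderFour

/-- Lemma 3.1: if all principal 3- and 4-retracts of an
`n`-quasigroup of order 4 (`n ≥ 5`) are permutably reducible, then it is
completely reducible. -/
theorem stmt11 {n : ℕ} (hn : 5 ≤ n) (f : (Fin n → Fin 4) → Fin 4)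
    (hq : IsNQuasigroup f)
    (h3 : ∀ (ι : Fin 3 → Fin n), Function.Injective ι →
      ∀ c : Fin n → Fin 4, PermutablyReducible (PrincipalRetract f ι c))
    (h4 : ∀ (ι : Fin 4 → Fin n), Function.Injective ι →
      ∀ c : Fin n → Fin 4, PermutablyReducible (PrincipalRetract f ι c)) :
    CompletelyReducible f := by
  have lift : ∀ k, 3 ≤ k → ∀ ι : Fin k → Fin n, Function.Injective ι →
      ∀ c : Fin n → Fin 4, PermutablyReducible (PrincipalRetract f ι c) := by
    intro k hk ι hι c
    refine OrderFour.permutablyReducible_of_retracts hk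
      (OrderFour.isNQuasigroup_principalRetract hq hι c) ?_ ?_
    · intro κ hκ d
      rw [OrderFour.principalRetract_principalRetract f hι c hκ d]
      exact h3 _ (hι.comp hκ) _
    · intro κ hκ d
      rw [OrderFour.principalRetract_principalRetract f hι c hκ d]
      exact h4 _ (hι.comp hκ) _
  exact ⟨OrderFour.permutablyReducible_of_retracts (by omega) hq h3 h4,
    fun k hk _ ι hι c => lift k hk ι hι c⟩
end

section
/- Let D be a permutably reducible n-quasigroup (n ≥ 3) of arbitrary order that has a permutably irreducible (n−1)-retract F given by F⟨x₀,…,x_{n−1}⟩ = D⟨x₀,…,x_{n−1},0⟩. Then there exist an index i ∈ {0,…,n−1} and a binary quasigroup h with h(x,0) = x for all x, such that D⟨x₀,…,xₙ⟩ = F⟨x₀,…,x_{i−1}, h(xᵢ,xₙ), x_{i+1},…,x_{n−1}⟩. -/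
/-- `g` is a quasigroup in the coordinates from `A` and `h` is a quasigroup in its first argument
and the coordinates outside `A`; neither depends on the other coordinates. -/
structure SplitsOver {ι S : Type*} [DecidableEq ι] (A : Finset ι) (g : (ι → S) → S)
    (h : S → (ι → S) → S) : Prop where
  inner_congr : ∀ x y, (∀ i ∈ A, x i = y i) → g x = g y
  inner_bijective : ∀ i ∈ A, ∀ x, Function.Bijective fun a => g (Function.update x i a)
  outer_congr : ∀ a x y, (∀ i ∉ A, x i = y i) → h a x = h a y
  outer_bijective_left : ∀ x, Function.Bijective fun a => h a x
  outer_bijective : ∀ i ∉ A, ∀ a x, Function.Bijective fun b => h a (Function.update x i b)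

theorem PermutablyReducible.exists_splitsOver {n : ℕ} {S : Type*} {f : (Fin n → S) → S}
    (hf : PermutablyReducible f) :
    ∃ (A : Finset (Fin n)) (g : (Fin n → S) → S) (h : S → (Fin n → S) → S),
      SplitsOver A g h ∧ 2 ≤ A.card ∧ A.card < n ∧ ∀ x, f x = h (g x) x := by
  obtain ⟨k, hk, hkn, σ, g, h, hg, hh, hfx⟩ := hf
  have hkn' : k ≤ n := by omega
  let A : Finset (Fin n) := Finset.univ.map ((Fin.castLEEmb hkn').trans σ.toEmbedding)
  have mem_A : ∀ i, i ∈ A ↔ (σ.symm i).val < k := by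
    intro i
    simp only [A, Finset.mem_map, Finset.mem_univ, true_and]
    constructor
    · rintro ⟨j, rfl⟩
      simp
    · intro hi
      exact ⟨⟨(σ.symm i).val, hi⟩, by simp [Fin.castLE]⟩
  refine ⟨A, fun x => g fun j => x (σ ⟨j.val, by omega⟩),
    fun a x => h (Fin.cons a fun j : Fin (n - k) => x (σ ⟨k + j.val, by omega⟩)),
    ⟨?_, ?_, ?_, ?_, ?_⟩, by simpa [A] using hk, by simp [A]; omega, hfx⟩
  · intro x y hxy
    congr 1
    funext j
    exact hxy _ ((mem_A _).2 (by simp))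
  · intro i hi x
    convert hg ⟨(σ.symm i).val, (mem_A i).1 hi⟩ (fun j => x (σ ⟨j.val, by omega⟩)) using 3 with a
    funext j
    simp only [Function.update_apply, Fin.ext_iff, ← Equiv.eq_symm_apply]
  · intro a x y hxy
    congr 2
    funext j
    exact hxy _ (by simp [mem_A])
  · intro x
    convert hh 0 (Fin.cons (f x) fun j : Fin (n - k) => x (σ ⟨k + j.val, by omega⟩)) using 3 with a
    rw [Fin.update_cons_zero]
  · intro i hi a x
    have hi' := (mem_A i).not.1 hi
    have hlt := (σ.symm i).isLt
    convert hh (Fin.succ ⟨(σ.symm i).val - k, by omega⟩)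
      (Fin.cons a fun j : Fin (n - k) => x (σ ⟨k + j.val, by omega⟩)) using 3 with b
    rw [← Fin.cons_update]
    congr 1
    funext j
    simp only [Function.update_apply, Fin.ext_iff, ← Equiv.eq_symm_apply]
    congr 1
    apply propext
    omega

theorem exists_perm_mem_iff_lt_card {n : ℕ} (A : Finset (Fin n)) :
    ∃ σ : Equiv.Perm (Fin n), ∀ j, σ j ∈ A ↔ j.val < A.card := by
  have hA : A.card ≤ n := by simpa using A.card_le_univ
  have hcard : Fintype.card {j : Fin n // j.val < A.card} = Fintype.card {i // i ∈ A} := by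
    rw [Fintype.card_coe, ← Fintype.card_fin A.card]
    exact Fintype.card_congr
      ⟨fun j => ⟨j.1.1, by simpa using j.2⟩, fun j => ⟨⟨j.1, by have := j.2; simp at this; omega⟩,
        by simp⟩, fun _ => rfl, fun _ => rfl⟩
  let e := Fintype.equivOfCardEq hcard
  refine ⟨e.extendSubtype, fun j => ⟨fun hj => ?_, fun hj => e.extendSubtype_mem j hj⟩⟩
  by_contra hlt
  exact e.extendSubtype_not_mem j hlt hj

theorem SplitsOver.permutablyReducible {n : ℕ} {S : Type*} [Nonempty S] {f : (Fin n → S) → S}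
    {A : Finset (Fin n)} {g : (Fin n → S) → S} {h : S → (Fin n → S) → S}
    (hs : SplitsOver A g h) (hA : 2 ≤ A.card) (hAn : A.card < n) (hf : ∀ x, f x = h (g x) x) :
    PermutablyReducible f := by
  obtain ⟨σ, hσ⟩ := exists_perm_mem_iff_lt_card A
  have mem_A : ∀ i, i ∈ A ↔ (σ.symm i).val < A.card := fun i => by simp [← hσ]
  obtain ⟨o⟩ := ‹Nonempty S›
  let inner (u : Fin A.card → S) (i : Fin n) : S :=
    if hi : (σ.symm i).val < A.card then u ⟨(σ.symm i).val, hi⟩ else o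
  let outer (v : Fin (n - A.card + 1) → S) (i : Fin n) : S :=
    v ⟨(σ.symm i).val - A.card + 1, by omega⟩
  refine ⟨A.card, hA, by omega, σ, fun u => g (inner u), fun v => h (v 0) (outer v), ?_, ?_, ?_⟩
  · intro j u
    convert hs.inner_bijective (σ ⟨j.val, by omega⟩) ((hσ _).2 j.isLt) (inner u) using 3 with a
    funext i
    simp only [inner, Function.update_apply, Fin.ext_iff, ← Equiv.symm_apply_eq]
    grind
  · intro j v
    cases j using Fin.cases with
    | zero =>
      convert hs.outer_bijective_left (outer v) using 2 with a
      simp only [Function.update_self]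
      congr 1
    | succ j =>
      convert hs.outer_bijective (σ ⟨A.card + j.val, by omega⟩) (by simp [hσ]) (v 0) (outer v)
        using 2 with b
      beta_reduce
      rw [Function.update_of_ne (Fin.succ_ne_zero j).symm]
      refine hs.outer_congr _ _ _ fun i hi => ?_
      have hi' := (mem_A i).not.1 hi
      simp only [outer, Function.update_apply, Fin.ext_iff, ← Equiv.symm_apply_eq, Fin.val_succ]
      congr 1
      apply propext
      omega
  · intro x
    rw [hf]
    dsimp only
    rw [Fin.cons_zero]
    have hg : g x = g (inner fun j => x (σ ⟨j.val, by omega⟩)) :=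
      hs.inner_congr _ _ fun i hi => by simp [inner, (mem_A i).1 hi]
    rw [← hg]
    refine hs.outer_congr _ _ _ fun i hi => ?_
    have hi' := (mem_A i).not.1 hi
    change x i = Fin.cons (α := fun _ => S) _ _ (Fin.succ ⟨(σ.symm i).val - A.card, by omega⟩)
    rw [Fin.cons_succ]
    congr 1
    rw [← Equiv.symm_apply_eq, Fin.ext_iff]
    simp only
    omega

/-- Fixing the last coordinate preserves a splitting. -/
theorem SplitsOver.snoc {m : ℕ} {S : Type*} {A : Finset (Fin (m + 1))} {g : (Fin (m + 1) → S) → S}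
    {h : S → (Fin (m + 1) → S) → S} (hs : SplitsOver A g h) (o : S) :
    SplitsOver {j : Fin m | j.castSucc ∈ A} (fun y => g (Fin.snoc y o))
      (fun a y => h a (Fin.snoc y o)) where
  inner_congr x y hxy := hs.inner_congr _ _ fun i hi => by
    cases i using Fin.lastCases with
    | last => simp
    | cast j => simpa using hxy j (by simpa using hi)
  inner_bijective j hj x := by
    simpa only [Fin.snoc_update] using
      hs.inner_bijective j.castSucc (by simpa using hj) (Fin.snoc x o)
  outer_congr a x y hxy := hs.outer_congr _ _ _ fun i hi => by
    cases i using Fin.lastCases with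
    | last => simp
    | cast j => simpa using hxy j (by simpa using hi)
  outer_bijective_left x := hs.outer_bijective_left _
  outer_bijective j hj a x := by
    simpa only [Fin.snoc_update] using
      hs.outer_bijective j.castSucc (by simpa using hj) a (Fin.snoc x o)

theorem card_filter_castSucc_mem {m : ℕ} (A : Finset (Fin (m + 1))) :
    (Finset.univ.filter fun j : Fin m => j.castSucc ∈ A).card = (A.erase (Fin.last m)).card := by
  rw [← Finset.card_map Fin.castSuccEmb]
  congr 1
  ext i
  cases i using Fin.lastCases with
  | last => simp [Fin.castSucc_ne_last]
  | cast j => simp [Fin.castSucc_ne_last]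

/-- If `G` is a binary quasigroup then `G p q = G (h p q) o` for a binary quasigroup `h` with
right identity `o`. -/
theorem IsBinaryQG.exists_right_unital {S : Type*} {G : S → S → S} (hG : IsBinaryQG G) (o : S) :
    ∃ h : S → S → S, IsBinaryQG h ∧ (∀ x, h x o = x) ∧ ∀ p q, G (h p q) o = G p q := by
  let e := Equiv.ofBijective _ (hG.2 o)
  refine ⟨fun p q => e.symm (G p q), ⟨fun p => e.symm.bijective.comp (hG.1 p),
    fun q => e.symm.bijective.comp (hG.2 q)⟩, fun x => e.symm_apply_apply x,
    fun p q => e.apply_symm_apply _⟩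

/-- If `H` is a binary quasigroup then solving `z = H w t` for `w` and evaluating `H w o` defines a
binary quasigroup with right identity `o`. -/
theorem IsBinaryQG.exists_right_unital_shift {S : Type*} {H : S → S → S} (hH : IsBinaryQG H)
    (o : S) :
    ∃ h : S → S → S, IsBinaryQG h ∧ (∀ x, h x o = x) ∧
      ∀ z w t, z = H w t ↔ h z t = H w o := by
  let e (t : S) := Equiv.ofBijective _ (hH.2 t)
  have he : ∀ t w z, (e t).symm z = w ↔ z = H w t := fun t w z => (e t).symm_apply_eq
  refine ⟨fun z t => e o ((e t).symm z), ⟨fun z => (e o).bijective.comp ⟨fun t t' htt => ?_,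
    fun w => ?_⟩, fun t => (e o).bijective.comp (e t).symm.bijective⟩,
    fun x => (e o).apply_symm_apply x, fun z w t => ?_⟩
  · have h₁ := (he t _ z).1 rfl
    beta_reduce at htt
    rw [htt] at h₁
    exact (hH.1 _).1 (h₁.symm.trans ((he t' _ z).1 rfl))
  · obtain ⟨t, ht⟩ := (hH.1 w).2 z
    exact ⟨t, (he t w z).2 ht.symm⟩
  · rw [← he]
    exact (e o).injective.eq_iff.symm

theorem SplitsOver.isBinaryQG_inner {ι S : Type*} [DecidableEq ι] {a b : ι} (hab : a ≠ b)
    {A : Finset ι} (hA : ∀ i, i ∈ A ↔ i = a ∨ i = b) {g : (ι → S) → S} {h : S → (ι → S) → S}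
    (hs : SplitsOver A g h) : IsBinaryQG fun p q => g (Function.update (fun _ => p) b q) := by
  refine ⟨fun p => hs.inner_bijective b ((hA b).2 (.inr rfl)) _, fun q => ?_⟩
  convert hs.inner_bijective a ((hA a).2 (.inl rfl)) (fun _ => q) using 2 with p
  refine hs.inner_congr _ _ fun i hi => ?_
  rcases (hA i).1 hi with rfl | rfl
  · simp [hab]
  · simp [hab.symm]

theorem SplitsOver.isBinaryQG_outer {ι S : Type*} [DecidableEq ι] {b : ι}
    {A : Finset ι} (hA : ∀ i, i ∉ A ↔ i = b) {g : (ι → S) → S} {h : S → (ι → S) → S}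
    (hs : SplitsOver A g h) : IsBinaryQG fun w t => h w fun _ => t := by
  refine ⟨fun w => ?_, fun t => hs.outer_bijective_left _⟩
  obtain hS | ⟨⟨o⟩⟩ := isEmpty_or_nonempty S
  · exact hS.elim w
  convert hs.outer_bijective b ((hA b).2 rfl) w (fun _ => o) using 2 with t
  refine hs.outer_congr _ _ _ fun i hi => ?_
  simp [(hA i).1 hi]

/-- Proposition 4.1: a permutably reducible `(m+1)`-quasigroup `D`
(`m+1 ≥ 3`, arbitrary order, with distinguished element `o` playing the role of
`0`) with a permutably irreducible `m`-retract `F⟨x₀,…,x_m⟩ = D⟨x₀,…,x_m,o⟩`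
admits a representation `D⟨x̄⟩ = F⟨…, h(xᵢ,x_{m+1}), …⟩` with `h(x,o) = x`. -/
theorem stmt12 {S : Type*} {m : ℕ} (hm : 2 ≤ m) (o : S)
    (D : (Fin (m + 1) → S) → S) (hD : IsNQuasigroup D)
    (hred : PermutablyReducible D)
    (F : (Fin m → S) → S)
    (hF : ∀ y : Fin m → S, F y = D (Fin.snoc y o))
    (hirr : ¬ PermutablyReducible F) :
    ∃ (i : Fin (m + 1)) (h : S → S → S),
      IsBinaryQG h ∧ (∀ x, h x o = x) ∧
      ∀ z : Fin (m + 2) → S,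
        (z 0 = D fun j : Fin (m + 1) => z j.succ) ↔
        ((fun w : Fin (m + 1) → S => w 0 = F fun j : Fin m => w j.succ)
          (fun j : Fin (m + 1) =>
            if j = i then h (z j.castSucc) (z (Fin.last (m + 1))) else z j.castSucc)) := by
  obtain ⟨A, g, h, hs, hA, hAm, hDx⟩ := hred.exists_splitsOver
  have : Nonempty S := ⟨o⟩
  have hirr' : 2 ≤ (A.erase (Fin.last m)).card → m ≤ (A.erase (Fin.last m)).card := by
    rw [← card_filter_castSucc_mem]
    intro h₂
    by_contra! hlt
    exact hirr ((hs.snoc o).permutablyReducible h₂ hlt fun y => by rw [hF, hDx])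
  by_cases hlast : Fin.last m ∈ A
  · have hcard := Finset.card_erase_of_mem hlast
    obtain ⟨b, hb⟩ : ∃ b, A.erase (Fin.last m) = {b} := Finset.card_eq_one.1 (by omega)
    have hb' : b ∈ A.erase (Fin.last m) := by simp [hb]
    obtain ⟨a, rfl⟩ := Fin.exists_castSucc_eq.2 (Finset.ne_of_mem_erase hb')
    have mem_A : ∀ i, i ∈ A ↔ i = a.castSucc ∨ i = Fin.last m := fun i => by
      rw [← Finset.insert_erase hlast, hb]
      simp [or_comm]
    obtain ⟨q, hq, hqo, hqg⟩ :=
      (hs.isBinaryQG_inner (Fin.castSucc_ne_last a) mem_A).exists_right_unital o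
    refine ⟨a.succ, q, hq, hqo, fun z => ?_⟩
    have h0 : (0 : Fin (m + 1)) ≠ a.succ := (Fin.succ_ne_zero a).symm
    simp only [if_neg h0, Fin.castSucc_zero, hF, hDx]
    refine Eq.congr_right ?_
    have hgg : ∀ x : Fin (m + 1) → S, g x =
        g (Function.update (fun _ => x a.castSucc) (Fin.last m) (x (Fin.last m))) := fun x =>
      hs.inner_congr _ _ fun i hi => by
        rcases (mem_A i).1 hi with rfl | rfl
        · simp [Fin.castSucc_ne_last]
        · simp
    rw [hgg, ← hqg, hgg (Fin.snoc _ o)]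
    simp only [Fin.snoc_castSucc, Fin.snoc_last, if_true, Fin.succ_last, Fin.succ_castSucc]
    refine hs.outer_congr _ _ _ fun i hi => ?_
    cases i using Fin.lastCases with
    | last => exact absurd hlast hi
    | cast j =>
      have hj : j ≠ a := by
        rintro rfl
        exact hi ((mem_A _).2 (.inl rfl))
      simp [hj]
  · rw [Finset.erase_eq_of_notMem hlast] at hirr'
    have hAe : A = Finset.univ.erase (Fin.last m) :=
      Finset.eq_of_subset_of_card_le
        (fun i hi => Finset.mem_erase.2 ⟨fun hi' => hlast (hi' ▸ hi), Finset.mem_univ i⟩)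
        (by simpa using hirr' hA)
    have notMem_A : ∀ i, i ∉ A ↔ i = Fin.last m := fun i => by simp [hAe]
    obtain ⟨q, hq, hqo, hqh⟩ := (hs.isBinaryQG_outer notMem_A).exists_right_unital_shift o
    refine ⟨0, q, hq, hqo, fun z => ?_⟩
    have hhh : ∀ (w : S) (x : Fin (m + 1) → S), h w x = h w fun _ => x (Fin.last m) := fun w x =>
      hs.outer_congr _ _ _ fun i hi => by rw [(notMem_A i).1 hi]
    have hgz : g (fun j => z j.succ) = g (Fin.snoc (fun j : Fin m => z j.succ.castSucc) o) :=
      hs.inner_congr _ _ fun i hi => by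
        cases i using Fin.lastCases with
        | last => exact absurd hi hlast
        | cast j => simp
    simp only [if_true, Fin.castSucc_zero, hF, hDx, Fin.succ_ne_zero, if_false]
    rw [hhh, hhh _ (Fin.snoc _ o), hgz, Fin.snoc_last, hqh, Fin.succ_last]
end
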